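/- arXiv:2505.22321 — 2 statements merged into one kernel-verified Lean document; each statement's English description precedes it below -/
import Mathlib

section
/- Let {G, (Γ0, Γ1), (Γ̃0, Γ̃1)} be a generalized boundary triple for the adjoint pair {S, S̃} with core {T, T̃} of {S*, S̃*}, assume ρ(A0) ≠ ∅, and let γ, γ̃ be the associated γ-fields. Then for every λ ∈ ρ(A0) the map h ↦ Γ̃1 (Ã0 − λ̄)^{-1} h is an everywhere defined bounded operator from H to G and coincides with the Hilbert space adjoint γ(λ)*, i.e., (γ(λ)g, h)_H = (g, Γ̃1 (Ã0 − λ̄)^{-1} h)_G for all g ∈ G and h ∈ H. Analogously, for every μ ∈ ρ(Ã0) the map h ↦ Γ1 (A0 − μ̄)^{-1} h is an everywhere defined bounded operator from H to G and (γ̃(μ)g, h)_H = (g, Γ1 (A0 − μ̄)^{-1} h)_G for all g ∈ G and h ∈ H. -/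
/-!
For `f ∈ ker (T - λ)` and `g ∈ ker Γ̃0`, Green's identity collapses to
`(f, (T̃ - λ̄) g) = (Γ0 f, Γ̃1 g)`, which is the adjoint formula with `f = γ(λ) Γ0 f` and
`h = (Ã0 - λ̄) g`. Since `A0 - λ` is onto, `dom T = ker Γ0 + ker (T - λ)`, so `Γ0` already maps
`ker (T - λ)` onto `G` and the formula tests `Γ̃1 g` against every vector of `G`. Thus
`Γ̃1 (Ã0 - λ̄)⁻¹` is weakly bounded, hence bounded by the uniform boundedness principle. Green's
identity is invariant under exchanging the two operators, which gives the second half.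
-/

open scoped ComplexInnerProductSpace

noncomputable section

/-- The inner product in the convention of the paper: linear in the *first* argument and
conjugate-linear in the second (the opposite of Mathlib's convention). -/
def pinner {E : Type*} [NormedAddCommGroup E] [InnerProductSpace ℂ E] (x y : E) : ℂ :=
  ⟪y, x⟫

variable {H G : Type*}
  [NormedAddCommGroup H] [InnerProductSpace ℂ H] [CompleteSpace H]
  [NormedAddCommGroup G] [InnerProductSpace ℂ G] [CompleteSpace G]

/-- The restriction of a partially defined linear operator `T` in `H` to a submodule `p` of its
domain, viewed again as a partially defined linear operator in `H`. -/
def LinearPMap.restrictTo (T : H →ₗ.[ℂ] H) (p : Submodule ℂ T.domain) : H →ₗ.[ℂ] H where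
  domain := p.map T.domain.subtype
  toFun := T.toFun ∘ₗ p.subtype ∘ₗ
    (Submodule.equivMapOfInjective T.domain.subtype (Submodule.injective_subtype _)
      p).symm.toLinearMap

/-- `R` is the (everywhere defined, bounded) resolvent of the operator `A` at the point `lam`,
i.e. `R` is a two-sided inverse of `A - lam`. -/
def ResolventAt (A : H →ₗ.[ℂ] H) (lam : ℂ) (R : H →L[ℂ] H) : Prop :=
  (∀ x : A.domain, R (A x - lam • (x : H)) = (x : H)) ∧
  (∀ h : H, ∃ x : A.domain, (x : H) = R h ∧ A x - lam • (x : H) = h)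

/-- `lam` belongs to the resolvent set of `A`: `A - lam` is a bijection of `dom A` onto `H`
with a bounded everywhere defined inverse. -/
def InResolventSet (A : H →ₗ.[ℂ] H) (lam : ℂ) : Prop :=
  ∃ R : H →L[ℂ] H, ResolventAt A lam R

/-- `{G, (Γ0, Γ1), (Γt0, Γt1)}` is a generalized boundary triple for the adjoint pair `{S, St}`
with core `{T, Tt}` of `{S*, St*}`. -/
structure IsGeneralizedBoundaryTriple (S St T Tt : H →ₗ.[ℂ] H)
    (Γ0 Γ1 : T.domain →ₗ[ℂ] G) (Γt0 Γt1 : Tt.domain →ₗ[ℂ] G) : Prop where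
  dense_S : Dense (S.domain : Set H)
  dense_St : Dense (St.domain : Set H)
  closed_S : S.IsClosed
  closed_St : St.IsClosed
  adjoint_pair : ∀ (f : S.domain) (g : St.domain),
    pinner (S f) (g : H) = pinner (f : H) (St g)
  T_le : T ≤ S.adjoint
  Tt_le : Tt ≤ St.adjoint
  T_adjoint : T.adjoint = S
  Tt_adjoint : Tt.adjoint = St
  green : ∀ (f : T.domain) (g : Tt.domain),
    pinner (T f) (g : H) - pinner (f : H) (Tt g)
      = pinner (Γ1 f) (Γt0 g) - pinner (Γ0 f) (Γt1 g)
  surj_Γ0 : Function.Surjective Γ0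
  surj_Γt0 : Function.Surjective Γt0
  A0_adjoint : (T.restrictTo (LinearMap.ker Γ0)).adjoint = Tt.restrictTo (LinearMap.ker Γt0)
  At0_adjoint : (Tt.restrictTo (LinearMap.ker Γt0)).adjoint = T.restrictTo (LinearMap.ker Γ0)

omit [CompleteSpace H] in
theorem exists_mem_coe_eq_restrictTo {T : H →ₗ.[ℂ] H} {p : Submodule ℂ T.domain}
    (x : (T.restrictTo p).domain) :
    ∃ f ∈ p, (f : H) = x ∧ T f = T.restrictTo p x := by
  obtain ⟨f, rfl⟩ := (Submodule.equivMapOfInjective T.domain.subtype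
    (Submodule.injective_subtype _) p).surjective x
  refine ⟨f, f.2, rfl, ?_⟩
  simp [LinearPMap.restrictTo, ← LinearPMap.toFun_eq_coe]

omit [CompleteSpace H] in
theorem InResolventSet.exists_mem_sub_smul_eq {T : H →ₗ.[ℂ] H} {p : Submodule ℂ T.domain}
    {lam : ℂ} (hlam : InResolventSet (T.restrictTo p) lam) (h : H) :
    ∃ f ∈ p, T f - lam • (f : H) = h := by
  obtain ⟨R, -, hR⟩ := hlam
  obtain ⟨x, -, hx⟩ := hR h
  obtain ⟨f, hfp, hfx, hTf⟩ := exists_mem_coe_eq_restrictTo x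
  exact ⟨f, hfp, by rw [hfx, hTf, hx]⟩

theorem exists_eigenvector_boundary_eq {R V W : Type*} [Ring R] [AddCommGroup V] [Module R V]
    [AddCommGroup W] [Module R W] {T : V →ₗ.[R] V} {Γ : T.domain →ₗ[R] W} {lam : R}
    (hΓ : Function.Surjective Γ)
    (hlam : ∀ h : V, ∃ f : T.domain, Γ f = 0 ∧ T f - lam • (f : V) = h) (y : W) :
    ∃ f : T.domain, T f = lam • (f : V) ∧ Γ f = y := by
  obtain ⟨f, rfl⟩ := hΓ y
  obtain ⟨k, hΓk, hk⟩ := hlam (T f - lam • (f : V))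
  refine ⟨f - k, ?_, by rw [map_sub, hΓk, sub_zero]⟩
  rw [LinearPMap.map_sub, Submodule.coe_sub, smul_sub, sub_eq_sub_iff_sub_eq_sub, hk]

section

variable {𝕜 E F : Type*} [RCLike 𝕜]

theorem exists_opNorm_le_mul_of_forall_norm_apply_le_mul
    [SeminormedAddCommGroup E] [NormedSpace 𝕜 E] [CompleteSpace E]
    [SeminormedAddCommGroup F] [NormedSpace 𝕜 F] {ι : Type*} {g : ι → E →L[𝕜] F} {r : ι → ℝ}
    (hr : ∀ i, 0 ≤ r i) (hg : ∀ x, ∃ C, ∀ i, ‖g i x‖ ≤ C * r i) :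
    ∃ C, 0 ≤ C ∧ ∀ i, ‖g i‖ ≤ C * r i := by
  have pointwise : ∀ x, ∃ C, ∀ i, ‖(((r i)⁻¹ : ℝ) : 𝕜) • g i x‖ ≤ C := by
    intro x
    obtain ⟨C, hC⟩ := hg x
    refine ⟨max C 0, fun i ↦ ?_⟩
    rw [norm_smul, RCLike.norm_ofReal, abs_of_nonneg (inv_nonneg.2 (hr i))]
    refine inv_mul_le_of_le_mul₀ (hr i) (le_max_right C 0) ((hC i).trans ?_)
    rw [mul_comm]
    gcongr
    exacts [hr i, le_max_left C 0]
  obtain ⟨C, hC⟩ := banach_steinhaus (g := fun i ↦ (((r i)⁻¹ : ℝ) : 𝕜) • g i) pointwise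
  refine ⟨max C 0, le_max_right C 0, fun i ↦ ?_⟩
  obtain hi | hi := (hr i).eq_or_lt
  · refine (g i).opNorm_le_bound (by simp [← hi]) fun x ↦ ?_
    obtain ⟨c, hc⟩ := hg x
    simpa [← hi] using hc i
  · have hCi := (hC i).trans (le_max_left C 0)
    rwa [norm_smul, RCLike.norm_ofReal, abs_of_pos (inv_pos.2 hi), inv_mul_le_iff₀ hi,
      mul_comm] at hCi

variable [NormedAddCommGroup E] [InnerProductSpace 𝕜 E]
  [NormedAddCommGroup F] [InnerProductSpace 𝕜 F]
  {T Tt : E →ₗ.[𝕜] E} {Γ0 Γ1 : T.domain →ₗ[𝕜] F} {Γt0 Γt1 : Tt.domain →ₗ[𝕜] F} {lam : 𝕜}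

/-- The abstract Green identity for the boundary maps `(Γ0, Γ1)` of `T` and `(Γt0, Γt1)` of `Tt`,
with Mathlib's inner product, which is linear in the second argument. -/
def GreenIdentity (T Tt : E →ₗ.[𝕜] E) (Γ0 Γ1 : T.domain →ₗ[𝕜] F)
    (Γt0 Γt1 : Tt.domain →ₗ[𝕜] F) : Prop :=
  ∀ (f : T.domain) (g : Tt.domain),
    inner 𝕜 (g : E) (T f) - inner 𝕜 (Tt g) (f : E) =
      inner 𝕜 (Γt0 g) (Γ1 f) - inner 𝕜 (Γt1 g) (Γ0 f)

namespace GreenIdentity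

theorem symm (green : GreenIdentity T Tt Γ0 Γ1 Γt0 Γt1) :
    GreenIdentity Tt T Γt0 Γt1 Γ0 Γ1 := by
  intro g f
  have conj_green := congrArg (starRingEnd 𝕜) (green f g)
  simp only [map_sub, inner_conj_symm] at conj_green
  linear_combination -conj_green

theorem inner_sub_smul_eq_inner_boundary (green : GreenIdentity T Tt Γ0 Γ1 Γt0 Γt1)
    {f : T.domain} {g : Tt.domain} (hf : T f = lam • (f : E)) (hg : Γt0 g = 0) :
    inner 𝕜 (Tt g - starRingEnd 𝕜 lam • (g : E)) (f : E) = inner 𝕜 (Γt1 g) (Γ0 f) := by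
  have hfg := green f g
  rw [hf, hg, inner_smul_right, inner_zero_left] at hfg
  rw [inner_sub_left, inner_smul_left, RCLike.conj_conj]
  linear_combination -hfg

theorem exists_norm_boundary_le [CompleteSpace F] (green : GreenIdentity T Tt Γ0 Γ1 Γt0 Γt1)
    (hΓ0 : Function.Surjective Γ0)
    (hlam : ∀ h : E, ∃ f : T.domain, Γ0 f = 0 ∧ T f - lam • (f : E) = h) :
    ∃ C : ℝ, 0 ≤ C ∧ ∀ g : Tt.domain, Γt0 g = 0 →
      ‖Γt1 g‖ ≤ C * ‖Tt g - starRingEnd 𝕜 lam • (g : E)‖ := by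
  have weak_bound (y : F) : ∃ C, ∀ g : LinearMap.ker Γt0,
      ‖innerSL 𝕜 (Γt1 g) y‖ ≤ C * ‖Tt g - starRingEnd 𝕜 lam • (g : E)‖ := by
    obtain ⟨f, hf, rfl⟩ := exists_eigenvector_boundary_eq hΓ0 hlam y
    refine ⟨‖(f : E)‖, fun g ↦ ?_⟩
    rw [innerSL_apply_apply, ← green.inner_sub_smul_eq_inner_boundary hf g.2, mul_comm]
    exact norm_inner_le_norm _ _
  obtain ⟨C, hC₀, hC⟩ :=
    exists_opNorm_le_mul_of_forall_norm_apply_le_mul (fun _ ↦ norm_nonneg _) weak_bound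
  exact ⟨C, hC₀, fun g hg ↦ by simpa only [innerSL_apply_norm] using hC ⟨g, hg⟩⟩

end GreenIdentity

theorem stmt8_general [CompleteSpace F] (green : GreenIdentity T Tt Γ0 Γ1 Γt0 Γt1)
    (hΓ0 : Function.Surjective Γ0)
    (hlam : ∀ h : E, ∃ f : T.domain, Γ0 f = 0 ∧ T f - lam • (f : E) = h) :
    (∃ C : ℝ, 0 ≤ C ∧ ∀ (h : E) (g : Tt.domain),
      Γt0 g = 0 → Tt g - starRingEnd 𝕜 lam • (g : E) = h → ‖Γt1 g‖ ≤ C * ‖h‖) ∧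
    (∀ (y : F) (h : E) (f : T.domain) (g : Tt.domain),
      T f = lam • (f : E) → Γ0 f = y →
      Γt0 g = 0 → Tt g - starRingEnd 𝕜 lam • (g : E) = h →
      inner 𝕜 h (f : E) = inner 𝕜 (Γt1 g) y) := by
  constructor
  · obtain ⟨C, hC₀, hC⟩ := green.exists_norm_boundary_le hΓ0 hlam
    exact ⟨C, hC₀, by rintro _ g hg rfl; exact hC g hg⟩
  · rintro _ _ f g hf rfl hg rfl
    exact green.inner_sub_smul_eq_inner_boundary hf hg

end

theorem stmt8
    (S St T Tt : H →ₗ.[ℂ] H)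
    (Γ0 Γ1 : T.domain →ₗ[ℂ] G) (Γt0 Γt1 : Tt.domain →ₗ[ℂ] G)
    (hgbt : IsGeneralizedBoundaryTriple S St T Tt Γ0 Γ1 Γt0 Γt1)
    (lam mu : ℂ)
    (hlam : InResolventSet (T.restrictTo (LinearMap.ker Γ0)) lam)
    (hlamt : InResolventSet (Tt.restrictTo (LinearMap.ker Γt0)) ((starRingEnd ℂ) lam))
    (hmu : InResolventSet (Tt.restrictTo (LinearMap.ker Γt0)) mu)
    (hmut : InResolventSet (T.restrictTo (LinearMap.ker Γ0)) ((starRingEnd ℂ) mu)) :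
    ((∀ h : H, ∃ g : Tt.domain, Γt0 g = 0 ∧ Tt g - ((starRingEnd ℂ) lam) • (g : H) = h) ∧
      (∃ C : ℝ, 0 ≤ C ∧ ∀ (h : H) (g : Tt.domain),
        Γt0 g = 0 → Tt g - ((starRingEnd ℂ) lam) • (g : H) = h → ‖Γt1 g‖ ≤ C * ‖h‖) ∧
      (∀ (gg : G) (h : H) (f : T.domain) (g : Tt.domain),
        T f = lam • (f : H) → Γ0 f = gg →
        Γt0 g = 0 → Tt g - ((starRingEnd ℂ) lam) • (g : H) = h →
        pinner ((f : H)) h = pinner gg (Γt1 g))) ∧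
    ((∀ h : H, ∃ f : T.domain, Γ0 f = 0 ∧ T f - ((starRingEnd ℂ) mu) • (f : H) = h) ∧
      (∃ C : ℝ, 0 ≤ C ∧ ∀ (h : H) (f : T.domain),
        Γ0 f = 0 → T f - ((starRingEnd ℂ) mu) • (f : H) = h → ‖Γ1 f‖ ≤ C * ‖h‖) ∧
      (∀ (gg : G) (h : H) (g : Tt.domain) (f : T.domain),
        Tt g = mu • (g : H) → Γt0 g = gg →
        Γ0 f = 0 → T f - ((starRingEnd ℂ) mu) • (f : H) = h →
        pinner ((g : H)) h = pinner gg (Γ1 f))) := by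
  exact
    ⟨⟨hlamt.exists_mem_sub_smul_eq,
        stmt8_general hgbt.green hgbt.surj_Γ0 hlam.exists_mem_sub_smul_eq⟩,
      ⟨hmut.exists_mem_sub_smul_eq,
        stmt8_general (GreenIdentity.symm hgbt.green) hgbt.surj_Γt0 hmu.exists_mem_sub_smul_eq⟩⟩

end
end

section
/- Let {G, (Γ0, Γ1), (Γ̃0, Γ̃1)} be a generalized boundary triple for the adjoint pair {S, S̃} with core {T, T̃} of {S*, S̃*}, and let B be a densely defined linear operator in G with adjoint B*. Then A_B ⊆ (Ã_{B*})* and Ã_{B*} ⊆ (A_B)*; in particular, (A_B f, g)_H = (f, Ã_{B*} g)_H holds for all f ∈ dom A_B and all g ∈ dom Ã_{B*}. -/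
/-!
For `f ∈ dom A_B` and `g ∈ dom Ã_{B*}` the right-hand side of the Green identity is
`(Γ1 f, B* Γ̃1 g) - (B Γ1 f, Γ̃1 g) = 0`, so `A_B` and `Ã_{B*}` are formal adjoints of each other.
In terms of graphs, this is the orthogonality that defines the adjoint `Θ*` of a linear relation `Θ`
in `G`, and the same cancellation takes place for boundary values in `Θ` and `Θ*`.

`LinearPMap.adjoint` has the junk value zero on its domain for an operator that is not densely
defined, so the inclusions into the adjoints also need `A_B` and `Ã_{B*}` to be densely defined.
They are, because they extend `S̃` and `S`: first, `S = T* ⊆ A0* = Ã0`; second, for `g ∈ dom S` the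
Green identity reduces to `(Γ0 f, Γ̃1 g) = 0` for all `f ∈ dom T`, and `Γ0` is surjective, so both
`Γ̃0` and `Γ̃1` vanish on `dom S`.
-/

open scoped ComplexInnerProductSpace

noncomputable section

variable {H G : Type*}
  [NormedAddCommGroup H] [InnerProductSpace ℂ H] [CompleteSpace H]
  [NormedAddCommGroup G] [InnerProductSpace ℂ G] [CompleteSpace G]

section Adjoint

variable {𝕜 E F : Type*} [RCLike 𝕜]
  [NormedAddCommGroup E] [InnerProductSpace 𝕜 E] [CompleteSpace E]
  [NormedAddCommGroup F] [InnerProductSpace 𝕜 F]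

theorem adjoint_le_adjoint_of_le {A T : E →ₗ.[𝕜] F} (hA : Dense (A.domain : Set E)) (h : A ≤ T) :
    T.adjoint ≤ A.adjoint := by
  refine LinearPMap.IsFormalAdjoint.le_adjoint hA fun x y => ?_
  obtain ⟨z, hxz, hAz⟩ := LinearPMap.exists_of_le h x
  rw [hAz, hxz]
  exact (LinearPMap.adjoint_isFormalAdjoint (hA.mono h.1)).symm z y

-- If `dom A` were not dense, then `A*` would be a zero operator by the junk value convention, so
-- `A = A**` would be everywhere defined.
theorem dense_domain_of_adjoint_adjoint_eq [CompleteSpace F] {A : E →ₗ.[𝕜] F}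
    (hA : A.adjoint.adjoint = A) : Dense (A.domain : Set E) := by
  by_contra h
  refine h fun y => subset_closure ?_
  rw [← hA]
  refine LinearPMap.mem_adjoint_domain_of_exists y ⟨0, fun x => ?_⟩
  rw [LinearPMap.adjoint_apply_of_not_dense h x, inner_zero_left, inner_zero_right]

end Adjoint

section RestrictTo

variable {V : Type*} [NormedAddCommGroup V] [InnerProductSpace ℂ V]

theorem exists_mem_restrictTo_apply_eq (T : V →ₗ.[ℂ] V) (p : Submodule ℂ T.domain)
    (x : (T.restrictTo p).domain) : ∃ y ∈ p, (x : V) = y ∧ T.restrictTo p x = T y := by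
  let e := Submodule.equivMapOfInjective T.domain.subtype (Submodule.injective_subtype _) p
  exact ⟨e.symm x, (e.symm x).2, congrArg Subtype.val (e.apply_symm_apply x).symm, rfl⟩

theorem restrictTo_le (T : V →ₗ.[ℂ] V) (p : Submodule ℂ T.domain) : T.restrictTo p ≤ T := by
  refine ⟨Submodule.map_subtype_le _ _, fun x y hxy => ?_⟩
  obtain ⟨z, -, hxz, hTz⟩ := exists_mem_restrictTo_apply_eq T p x
  rw [hTz, Subtype.ext (hxz.symm.trans hxy)]

theorem le_restrictTo_iff {A T : V →ₗ.[ℂ] V} {p : Submodule ℂ T.domain} :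
    A ≤ T.restrictTo p ↔ A ≤ T ∧ ∀ y : T.domain, (y : V) ∈ A.domain → y ∈ p := by
  constructor
  · refine fun h => ⟨h.trans (restrictTo_le T p), fun y hy => ?_⟩
    obtain ⟨z, hz, hzy⟩ := h.1 hy
    rwa [← Subtype.ext hzy]
  · rintro ⟨hAT, hp⟩
    have hdom : A.domain ≤ (T.restrictTo p).domain := fun x hx =>
      ⟨⟨x, hAT.1 hx⟩, hp _ hx, rfl⟩
    refine ⟨hdom, fun x y hxy => ?_⟩
    obtain ⟨z, -, hyz, hTz⟩ := exists_mem_restrictTo_apply_eq T p y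
    rw [hTz]
    exact hAT.2 (hxy.trans hyz)

theorem isFormalAdjoint_restrictTo {T Tt : V →ₗ.[ℂ] V} {p : Submodule ℂ T.domain}
    {q : Submodule ℂ Tt.domain}
    (h : ∀ f ∈ p, ∀ g ∈ q, pinner (T f) (g : V) = pinner (f : V) (Tt g)) :
    (T.restrictTo p).IsFormalAdjoint (Tt.restrictTo q) := by
  refine LinearPMap.IsFormalAdjoint.symm fun y x => ?_
  obtain ⟨f, hf, hxf, hTf⟩ := exists_mem_restrictTo_apply_eq T p x
  obtain ⟨g, hg, hyg, hTg⟩ := exists_mem_restrictTo_apply_eq Tt q y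
  rw [hTf, hTg, hxf, hyg]
  exact (h f hf g hg).symm

end RestrictTo

theorem pinner_conj_symm {V : Type*} [NormedAddCommGroup V] [InnerProductSpace ℂ V] (x y : V) :
    starRingEnd ℂ (pinner x y) = pinner y x :=
  inner_conj_symm x y

namespace IsGeneralizedBoundaryTriple

variable {K : Type*} [NormedAddCommGroup K] [InnerProductSpace ℂ K]
  {S St T Tt : H →ₗ.[ℂ] H} {Γ0 Γ1 : T.domain →ₗ[ℂ] K} {Γt0 Γt1 : Tt.domain →ₗ[ℂ] K}

theorem symm (h : IsGeneralizedBoundaryTriple S St T Tt Γ0 Γ1 Γt0 Γt1) :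
    IsGeneralizedBoundaryTriple St S Tt T Γt0 Γt1 Γ0 Γ1 where
  dense_S := h.dense_St
  dense_St := h.dense_S
  closed_S := h.closed_St
  closed_St := h.closed_S
  adjoint_pair f g := by
    have hconj := congrArg (starRingEnd ℂ) (h.adjoint_pair g f)
    simp only [pinner_conj_symm] at hconj
    exact hconj.symm
  T_le := h.Tt_le
  Tt_le := h.T_le
  T_adjoint := h.Tt_adjoint
  Tt_adjoint := h.T_adjoint
  green f g := by
    have hconj := congrArg (starRingEnd ℂ) (h.green g f)
    simp only [map_sub, pinner_conj_symm] at hconj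
    linear_combination -hconj
  surj_Γ0 := h.surj_Γt0
  surj_Γt0 := h.surj_Γ0
  A0_adjoint := h.At0_adjoint
  At0_adjoint := h.A0_adjoint

theorem dense_domain_restrictTo_ker (h : IsGeneralizedBoundaryTriple S St T Tt Γ0 Γ1 Γt0 Γt1) :
    Dense ((T.restrictTo (LinearMap.ker Γ0)).domain : Set H) :=
  dense_domain_of_adjoint_adjoint_eq (by rw [h.A0_adjoint, h.At0_adjoint])

theorem le_restrictTo_ker (h : IsGeneralizedBoundaryTriple S St T Tt Γ0 Γ1 Γt0 Γt1) :
    S ≤ Tt.restrictTo (LinearMap.ker Γt0) :=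
  calc
    S = T.adjoint := h.T_adjoint.symm
    _ ≤ (T.restrictTo (LinearMap.ker Γ0)).adjoint :=
      adjoint_le_adjoint_of_le h.dense_domain_restrictTo_ker (restrictTo_le T _)
    _ = Tt.restrictTo (LinearMap.ker Γt0) := h.A0_adjoint

theorem isFormalAdjoint_core (h : IsGeneralizedBoundaryTriple S St T Tt Γ0 Γ1 Γt0 Γt1) :
    S.IsFormalAdjoint T := by
  have hT : Dense (T.domain : Set H) := h.dense_domain_restrictTo_ker.mono (restrictTo_le T _).1
  simpa only [h.T_adjoint] using LinearPMap.adjoint_isFormalAdjoint hT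

theorem Γt0_eq_zero_of_mem_domain (h : IsGeneralizedBoundaryTriple S St T Tt Γ0 Γ1 Γt0 Γt1)
    {g : Tt.domain} (hg : (g : H) ∈ S.domain) : Γt0 g = 0 :=
  (le_restrictTo_iff.1 h.le_restrictTo_ker).2 g hg

theorem Γt1_eq_zero_of_mem_domain (h : IsGeneralizedBoundaryTriple S St T Tt Γ0 Γ1 Γt0 Γt1)
    {g : Tt.domain} (hg : (g : H) ∈ S.domain) : Γt1 g = 0 := by
  obtain ⟨f, hf⟩ := h.surj_Γ0 (Γt1 g)
  have hSg : S ⟨g, hg⟩ = Tt g := (le_restrictTo_iff.1 h.le_restrictTo_ker).1.2 rfl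
  have hformal : pinner (T f) (g : H) = pinner (f : H) (Tt g) := by
    rw [← hSg]
    exact (h.isFormalAdjoint_core ⟨g, hg⟩ f).symm
  have hgreen := h.green f g
  rw [hformal, sub_self, h.Γt0_eq_zero_of_mem_domain hg, hf] at hgreen
  simpa only [pinner, inner_zero_left, zero_sub, zero_eq_neg, inner_self_eq_zero] using hgreen

theorem le_restrictTo_comap (h : IsGeneralizedBoundaryTriple S St T Tt Γ0 Γ1 Γt0 Γt1)
    (Θ : Submodule ℂ (K × K)) : S ≤ Tt.restrictTo (Submodule.comap (Γt1.prod Γt0) Θ) := by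
  refine le_restrictTo_iff.2 ⟨(le_restrictTo_iff.1 h.le_restrictTo_ker).1, fun g hg => ?_⟩
  refine LinearMap.ker_le_comap _ ?_
  rw [LinearMap.ker_prod]
  exact ⟨h.Γt1_eq_zero_of_mem_domain hg, h.Γt0_eq_zero_of_mem_domain hg⟩

theorem dense_domain_restrictTo_comap (h : IsGeneralizedBoundaryTriple S St T Tt Γ0 Γ1 Γt0 Γt1)
    (Θ : Submodule ℂ (K × K)) :
    Dense ((Tt.restrictTo (Submodule.comap (Γt1.prod Γt0) Θ)).domain : Set H) :=
  h.dense_S.mono (h.le_restrictTo_comap Θ).1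

theorem pinner_eq_of_mem_adjoint (h : IsGeneralizedBoundaryTriple S St T Tt Γ0 Γ1 Γt0 Γt1)
    {Θ : Submodule ℂ (K × K)} {f : T.domain} {g : Tt.domain}
    (hf : (Γ1 f, Γ0 f) ∈ Θ) (hg : (Γt1 g, Γt0 g) ∈ Θ.adjoint) :
    pinner (T f) (g : H) = pinner (f : H) (Tt g) := by
  have hadjoint : pinner (Γt1 g) (Γ0 f) - pinner (Γt0 g) (Γ1 f) = 0 :=
    (Submodule.mem_adjoint_iff _ _).1 hg _ _ hf
  have hconj := congrArg (starRingEnd ℂ) hadjoint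
  simp only [map_sub, map_zero, pinner_conj_symm] at hconj
  linear_combination h.green f g - hconj

end IsGeneralizedBoundaryTriple

theorem stmt14_general {K : Type*} [NormedAddCommGroup K] [InnerProductSpace ℂ K]
    (S St T Tt : H →ₗ.[ℂ] H)
    (Γ0 Γ1 : T.domain →ₗ[ℂ] K) (Γt0 Γt1 : Tt.domain →ₗ[ℂ] K)
    (hgbt : IsGeneralizedBoundaryTriple S St T Tt Γ0 Γ1 Γt0 Γt1)
    (Θ Θt : Submodule ℂ (K × K)) (hΘ : Θt ≤ Θ.adjoint) :
    T.restrictTo (Submodule.comap (Γ1.prod Γ0) Θ)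
      ≤ (Tt.restrictTo (Submodule.comap (Γt1.prod Γt0) Θt)).adjoint ∧
    Tt.restrictTo (Submodule.comap (Γt1.prod Γt0) Θt)
      ≤ (T.restrictTo (Submodule.comap (Γ1.prod Γ0) Θ)).adjoint ∧
    (∀ (f : T.domain) (g : Tt.domain),
      (Γ1 f, Γ0 f) ∈ Θ → (Γt1 g, Γt0 g) ∈ Θt →
      pinner (T f) (g : H) = pinner (f : H) (Tt g)) := by
  have hpinner : ∀ (f : T.domain) (g : Tt.domain), (Γ1 f, Γ0 f) ∈ Θ → (Γt1 g, Γt0 g) ∈ Θt →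
      pinner (T f) (g : H) = pinner (f : H) (Tt g) :=
    fun f g hf hg => hgbt.pinner_eq_of_mem_adjoint hf (hΘ hg)
  have hformal : (T.restrictTo (Submodule.comap (Γ1.prod Γ0) Θ)).IsFormalAdjoint
      (Tt.restrictTo (Submodule.comap (Γt1.prod Γt0) Θt)) :=
    isFormalAdjoint_restrictTo fun f hf g hg => hpinner f g hf hg
  exact ⟨hformal.symm.le_adjoint (hgbt.dense_domain_restrictTo_comap Θt),
    hformal.le_adjoint (hgbt.symm.dense_domain_restrictTo_comap Θ), hpinner⟩

theorem stmt14
    (S St T Tt : H →ₗ.[ℂ] H)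
    (Γ0 Γ1 : T.domain →ₗ[ℂ] G) (Γt0 Γt1 : Tt.domain →ₗ[ℂ] G)
    (hgbt : IsGeneralizedBoundaryTriple S St T Tt Γ0 Γ1 Γt0 Γt1)
    (B : G →ₗ.[ℂ] G) (hB : Dense ((B.domain : Submodule ℂ G) : Set G)) :
    T.restrictTo (Submodule.comap (Γ1.prod Γ0) B.graph)
      ≤ (Tt.restrictTo (Submodule.comap (Γt1.prod Γt0) B.adjoint.graph)).adjoint ∧
    Tt.restrictTo (Submodule.comap (Γt1.prod Γt0) B.adjoint.graph)
      ≤ (T.restrictTo (Submodule.comap (Γ1.prod Γ0) B.graph)).adjoint ∧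
    (∀ (f : T.domain) (g : Tt.domain),
      (Γ1 f, Γ0 f) ∈ B.graph → (Γt1 g, Γt0 g) ∈ B.adjoint.graph →
      pinner (T f) (g : H) = pinner (f : H) (Tt g)) :=
  stmt14_general S St T Tt Γ0 Γ1 Γt0 Γt1 hgbt B.graph B.adjoint.graph
    (LinearPMap.adjoint_graph_eq_graph_adjoint hB).le

end
end
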